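/- arXiv:math/9406221 — 2 statements merged into one kernel-verified Lean document; each statement's English description precedes it below -/
import Mathlib

section
/- Let α > −1/2, γ > −1 and m ≥ 1. Let Ŝ_n^{(α+1,γ)} be the monic generalized ultraspherical polynomials with parameters (α+1, γ), and define W(z) := z·Ŝ_{2m}^{(α+1,γ)}(z) − (2m/(2α+γ+4m))·Ŝ_{2m−1}^{(α+1,γ)}(z). Then: (a) every real root z₀ ≠ 0 of W satisfies (2m+γ+1)·Ŝ_{2m}^{(α+1,γ)}(z₀) = W'(z₀); (b) W(0) = 0 and (2m+γ+1)·Ŝ_{2m}^{(α+1,γ)}(0) = (γ+1)·W'(0). In other words, the reversed measure ξ_{α,γ,2m}^{R*}, whose Stieltjes transform is Ŝ_{2m}^{(α+1,γ)}/W, has equal masses 1/(2m+γ+1) at all support points different from 0 and mass (γ+1)/(2m+γ+1) at the point 0. -/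
open Polynomial

/-- The recurrence coefficients `γ_n^{(α,γ)}` of the monic generalized ultraspherical
polynomials: `γ_{2m}^{(α,γ)} = (2m-1+γ)(2m-2+2α+γ)/((4m-4+2α+γ)(4m-2+2α+γ))` and
`γ_{2m+1}^{(α,γ)} = 2m(2m+2α-1)/((4m-2+2α+γ)(4m+2α+γ))`. -/
noncomputable def gammaCoef (α γ : ℝ) (n : ℕ) : ℝ :=
  if Even n then
    ((n : ℝ) - 1 + γ) * ((n : ℝ) - 2 + 2 * α + γ) /
      ((2 * (n : ℝ) - 4 + 2 * α + γ) * (2 * (n : ℝ) - 2 + 2 * α + γ))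
  else
    ((n : ℝ) - 1) * ((n : ℝ) - 2 + 2 * α) /
      ((2 * (n : ℝ) - 4 + 2 * α + γ) * (2 * (n : ℝ) - 2 + 2 * α + γ))

/-- The monic generalized ultraspherical polynomials `Ŝ_n^{(α,γ)}`, orthogonal with respect
to `|x|^γ (1-x²)^{α-1/2}` on `[-1,1]`: `Ŝ 0 = 1`, `Ŝ 1 = X` and
`Ŝ_{n+1}(x) = x · Ŝ_n(x) - γ_{n+1}^{(α,γ)} · Ŝ_{n-1}(x)`. -/
noncomputable def genUltra (α γ : ℝ) : ℕ → Polynomial ℝ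
  | 0 => 1
  | 1 => Polynomial.X
  | n + 2 =>
      Polynomial.X * genUltra α γ (n + 1) -
        Polynomial.C (gammaCoef α γ (n + 2)) * genUltra α γ n

/-!
The polynomial `W` plays the role of `Ŝ_{2m+1}^{(α,γ)}`. The Dunkl operator
`T f (x) = f'(x) + γ (f(x) - f(-x)) / (2x)` lowers the degree by one and raises `α` by one, so that
`T W = (2m+1+γ) Ŝ_{2m}^{(α+1,γ)}`. At a root `z₀ ≠ 0` of the odd polynomial `W` the difference
quotient vanishes and `T W` is `W'`, whereas at `0` it tends to `γ W'(0)`, so that `T W` is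
`(1+γ) W'(0)`. The lowering relation follows by induction along the three-term recurrence from the
commutation rule `T (x f) = x T f + f + γ f(-x)`.
-/

section Dunkl

variable {K : Type*} [Field K]

/-- The Dunkl operator `p ↦ p' + γ (p(x) - p(-x)) / (2x)` on polynomials, the analogue of the
derivative for even weights multiplied by `|x|^γ`. The numerator has no constant term, so the
quotient is encoded by the exact division `Polynomial.divX`. -/
noncomputable def dunkl (γ : K) : K[X] →ₗ[K] K[X] where
  toFun p := derivative p + C (γ / 2) * (p - p.comp (-X)).divX
  map_add' p q := by
    rw [derivative_add, add_comp, add_sub_add_comm, divX_add]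
    ring
  map_smul' c p := by
    rw [derivative_smul, smul_comp, ← smul_sub, smul_eq_C_mul (p := p - _), divX_C_mul,
      RingHom.id_apply, smul_add, smul_eq_C_mul, smul_eq_C_mul]
    ring

theorem X_mul_dunkl (γ : K) (p : K[X]) :
    X * dunkl γ p = X * derivative p + C (γ / 2) * (p - p.comp (-X)) := by
  have hcoeff : (p - p.comp (-X)).coeff 0 = 0 := by simp [coeff_zero_eq_eval_zero]
  have hdivX : (p - p.comp (-X)).divX * X = p - p.comp (-X) := by
    simpa [hcoeff] using divX_mul_X_add (p - p.comp (-X))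
  change X * (derivative p + C (γ / 2) * (p - p.comp (-X)).divX) = _
  linear_combination C (γ / 2) * hdivX

theorem dunkl_one (γ : K) : dunkl γ 1 = 0 :=
  mul_left_cancel₀ X_ne_zero (by simp [X_mul_dunkl])

theorem eval_dunkl_of_eval_eq_zero (γ : K) {p : K[X]} {x : K} (hx : x ≠ 0)
    (hpx : p.eval x = 0) (hpnegx : p.eval (-x) = 0) :
    (dunkl γ p).eval x = (derivative p).eval x := by
  have h := congrArg (eval x) (X_mul_dunkl γ p)
  simp only [eval_mul, eval_add, eval_sub, eval_X, eval_C, eval_comp, eval_neg, hpx, hpnegx,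
    sub_zero, mul_zero, add_zero] at h
  exact mul_left_cancel₀ hx h

theorem dunkl_X_mul [NeZero (2 : K)] (γ : K) (p : K[X]) :
    dunkl γ (X * p) = X * dunkl γ p + p + C γ * p.comp (-X) := by
  have hhalf : C (γ / 2) + C (γ / 2) = C γ := by rw [← C_add, add_halves]
  refine mul_left_cancel₀ X_ne_zero ?_
  simp only [mul_add, X_mul_dunkl, derivative_mul, derivative_X, mul_comp, X_comp, ← hhalf]
  ring

theorem eval_zero_dunkl [NeZero (2 : K)] (γ : K) (p : K[X]) :
    (dunkl γ p).eval 0 = (1 + γ) * (derivative p).eval 0 := by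
  have h := congrArg (fun q => (derivative q).eval 0) (X_mul_dunkl γ p)
  simp only [derivative_mul, derivative_add, derivative_sub, derivative_comp, derivative_neg,
    derivative_X, derivative_C, eval_add, eval_sub, eval_mul, eval_neg, eval_comp, eval_X, eval_C,
    eval_one, eval_zero, neg_zero] at h
  linear_combination h + (derivative p).eval 0 * add_halves γ

/-- The Dunkl number `n` for even `n` and `n + γ` for odd `n`: the Dunkl operator sends `X ^ n` to
this multiple of `X ^ (n - 1)`. The closed form encodes both parities at once. -/
def dunklNumber (γ : K) (n : ℕ) : K :=
  n + γ / 2 * (1 - (-1) ^ n)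

theorem dunklNumber_zero (γ : K) : dunklNumber γ 0 = 0 := by
  simp [dunklNumber]

theorem dunklNumber_of_even (γ : K) {n : ℕ} (hn : Even n) : dunklNumber γ n = n := by
  simp [dunklNumber, hn.neg_one_pow]

theorem dunklNumber_add_two (γ : K) (n : ℕ) : dunklNumber γ (n + 2) = dunklNumber γ n + 2 := by
  simp only [dunklNumber]
  push_cast
  ring

theorem dunklNumber_succ [NeZero (2 : K)] (γ : K) (n : ℕ) :
    dunklNumber γ (n + 1) = dunklNumber γ n + 1 + γ * (-1) ^ n := by
  simp only [dunklNumber]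
  push_cast
  linear_combination (-1) ^ n * add_halves γ

theorem dunklNumber_of_odd [NeZero (2 : K)] (γ : K) {n : ℕ} (hn : Odd n) :
    dunklNumber γ n = n + γ := by
  rw [dunklNumber, hn.neg_one_pow]
  linear_combination add_halves γ

theorem dunklNumber_two_mul_add_one [NeZero (2 : K)] (γ : K) (m : ℕ) :
    dunklNumber γ (2 * m + 1) = 2 * m + γ + 1 := by
  rw [dunklNumber_of_odd γ (odd_two_mul_add_one m)]
  push_cast
  ring

theorem dunklNumber_add_succ [NeZero (2 : K)] (γ : K) (n : ℕ) :
    dunklNumber γ n + dunklNumber γ (n + 1) = 2 * n + 1 + γ := by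
  simp only [dunklNumber]
  push_cast
  linear_combination add_halves γ

end Dunkl

theorem gammaCoef_succ (α γ : ℝ) (n : ℕ) :
    gammaCoef α γ (n + 1) = dunklNumber γ n * (dunklNumber γ n + 2 * α - 1) /
      ((2 * n - 2 + 2 * α + γ) * (2 * n + 2 * α + γ)) := by
  rcases n.even_or_odd with hn | hn
  · rw [gammaCoef, if_neg (by simpa using hn.add_one), dunklNumber_of_even γ hn]
    push_cast
    congr 1 <;> ring
  · rw [gammaCoef, if_pos hn.add_one, dunklNumber_of_odd γ hn]
    push_cast
    congr 1 <;> ring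

theorem genUltra_succ (α γ : ℝ) (n : ℕ) :
    genUltra α γ (n + 1) =
      X * genUltra α γ n - C (gammaCoef α γ (n + 1)) * genUltra α γ (n - 1) := by
  cases n with
  | zero => simp [genUltra, gammaCoef_succ, dunklNumber_zero]
  | succ n => rfl

theorem genUltra_comp_neg_X (α γ : ℝ) : ∀ n : ℕ,
    (genUltra α γ n).comp (-X) = (-1) ^ n * genUltra α γ n
  | 0 => by simp [genUltra]
  | 1 => by simp [genUltra]
  | n + 2 => by
    simp only [genUltra, sub_comp, mul_comp, X_comp, C_comp, genUltra_comp_neg_X α γ n,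
      genUltra_comp_neg_X α γ (n + 1)]
    ring

/-- The coefficient of `Ŝ_{n-1}^{(α+1,γ)}` in the expansion of `x Ŝ_n^{(α+1,γ)} - Ŝ_{n+1}^{(α,γ)}`.
For `n = 0` it vanishes, also when `2α + γ = 0`. -/
noncomputable def contiguousCoef (α γ : ℝ) (n : ℕ) : ℝ :=
  dunklNumber γ n / (2 * n + 2 * α + γ)

/-- The polynomial `Ŝ_{n+1}^{(α,γ)}`, expressed through the parameters `(α+1,γ)`. Unlike
`genUltra α γ (n + 1)`, it does not degenerate when `2α + γ = 0`, where the formula for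
`gammaCoef α γ 2` divides by zero. For `n = 0`, `n - 1` truncates but its term has
coefficient `0`. -/
noncomputable def contiguousUltra (α γ : ℝ) (n : ℕ) : ℝ[X] :=
  X * genUltra (α + 1) γ n - C (contiguousCoef α γ n) * genUltra (α + 1) γ (n - 1)

theorem contiguousUltra_two_mul (α γ : ℝ) (m : ℕ) :
    contiguousUltra α γ (2 * m) = X * genUltra (α + 1) γ (2 * m) -
      C (2 * (m : ℝ) / (2 * α + γ + 4 * m)) * genUltra (α + 1) γ (2 * m - 1) := by
  have hcoef : contiguousCoef α γ (2 * m) = 2 * (m : ℝ) / (2 * α + γ + 4 * m) := by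
    rw [contiguousCoef, dunklNumber_of_even γ (even_two_mul m)]
    push_cast
    congr 1
    ring
  rw [contiguousUltra, hcoef]

theorem contiguousUltra_comp_neg_X (α γ : ℝ) (n : ℕ) :
    (contiguousUltra α γ n).comp (-X) = (-1) ^ (n + 1) * contiguousUltra α γ n := by
  cases n with
  | zero => simp [contiguousUltra, contiguousCoef, dunklNumber_zero, genUltra]
  | succ n =>
    simp only [contiguousUltra, sub_comp, mul_comp, X_comp, C_comp, genUltra_comp_neg_X,
      Nat.add_sub_cancel]
    ring

theorem eval_neg_contiguousUltra (α γ : ℝ) (n : ℕ) (x : ℝ) :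
    (contiguousUltra α γ n).eval (-x) = (-1) ^ (n + 1) * (contiguousUltra α γ n).eval x := by
  simpa using congrArg (eval x) (contiguousUltra_comp_neg_X α γ n)

theorem eval_zero_contiguousUltra_of_even (α γ : ℝ) {n : ℕ} (hn : Even n) :
    (contiguousUltra α γ n).eval 0 = 0 := by
  have h := eval_neg_contiguousUltra α γ n 0
  rw [neg_zero, hn.add_one.neg_one_pow] at h
  linarith

theorem gammaCoef_add_two (α γ : ℝ) (n : ℕ) :
    gammaCoef α γ (n + 2) = dunklNumber γ (n + 1) * (dunklNumber γ (n + 1) + 2 * α - 1) /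
      ((2 * n + 2 * α + γ) * (2 * n + 2 * α + γ + 2)) := by
  rw [gammaCoef_succ]
  push_cast
  congr 2 <;> ring

theorem gammaCoef_add_one_succ (α γ : ℝ) (n : ℕ) :
    gammaCoef (α + 1) γ (n + 1) = dunklNumber γ n * (dunklNumber γ n + 2 * α + 1) /
      ((2 * n + 2 * α + γ) * (2 * n + 2 * α + γ + 2)) := by
  rw [gammaCoef_succ]
  congr 2 <;> ring

theorem contiguousCoef_succ (α γ : ℝ) (n : ℕ) :
    contiguousCoef α γ (n + 1) = dunklNumber γ (n + 1) / (2 * n + 2 * α + γ + 2) := by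
  rw [contiguousCoef]
  push_cast
  congr 1
  ring

theorem contiguousCoef_add_two_mul_gammaCoef (α γ : ℝ) (n : ℕ) :
    contiguousCoef α γ (n + 2) * gammaCoef (α + 1) γ (n + 1) =
      gammaCoef α γ (n + 3) * contiguousCoef α γ n := by
  rw [contiguousCoef_succ, contiguousCoef, gammaCoef_add_two α, gammaCoef_add_one_succ,
    dunklNumber_add_two, div_mul_div_comm, div_mul_div_comm]
  push_cast
  congr 1 <;> ring

theorem denominator_add_two_ne_zero {α γ : ℝ}
    (h : ∀ k : ℕ, k ≠ 0 → 2 * (k : ℝ) + 2 * α + γ ≠ 0) (n : ℕ) :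
    2 * (n : ℝ) + 2 * α + γ + 2 ≠ 0 := by
  convert h (n + 1) n.succ_ne_zero using 1
  push_cast
  ring

theorem contiguousCoef_succ_add_gammaCoef {α γ : ℝ}
    (h : ∀ k : ℕ, k ≠ 0 → 2 * (k : ℝ) + 2 * α + γ ≠ 0) (n : ℕ) :
    contiguousCoef α γ (n + 1) + gammaCoef α γ (n + 3) =
      gammaCoef (α + 1) γ (n + 2) + contiguousCoef α γ (n + 2) := by
  have hden := h (n + 1) n.succ_ne_zero
  have hden_add_two := denominator_add_two_ne_zero h (n + 1)
  have hsum : dunklNumber γ (n + 1) + dunklNumber γ (n + 2) =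
      2 * (n + 1 : ℕ) + 2 * α + γ + 1 - 2 * α := by
    linear_combination dunklNumber_add_succ γ (n + 1)
  rw [contiguousCoef_succ α γ (n + 1), contiguousCoef, gammaCoef_add_two α,
    gammaCoef_add_one_succ]
  generalize 2 * ((n + 1 : ℕ) : ℝ) + 2 * α + γ = d at hden hden_add_two hsum ⊢
  field_simp
  linear_combination (dunklNumber γ (n + 2) - dunklNumber γ (n + 1)) * hsum

theorem dunklNumber_add_three_mul_gammaCoef {α γ : ℝ}
    (h : ∀ k : ℕ, k ≠ 0 → 2 * (k : ℝ) + 2 * α + γ ≠ 0) (n : ℕ) :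
    dunklNumber γ (n + 3) * gammaCoef (α + 1) γ (n + 2) =
      (dunklNumber γ (n + 3) - dunklNumber γ (n + 2)) * contiguousCoef α γ (n + 1) +
        gammaCoef α γ (n + 3) * dunklNumber γ (n + 1) := by
  have hden := h (n + 1) n.succ_ne_zero
  have hden_add_two := denominator_add_two_ne_zero h (n + 1)
  have hsum : dunklNumber γ (n + 1) + dunklNumber γ (n + 2) =
      2 * (n + 1 : ℕ) + 2 * α + γ + 1 - 2 * α := by
    linear_combination dunklNumber_add_succ γ (n + 1)
  rw [contiguousCoef, gammaCoef_add_two α, gammaCoef_add_one_succ, dunklNumber_add_two]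
  generalize 2 * ((n + 1 : ℕ) : ℝ) + 2 * α + γ = d at hden hden_add_two hsum ⊢
  field_simp
  linear_combination dunklNumber γ (n + 1) *
    (dunklNumber γ (n + 1) + 2 - dunklNumber γ (n + 2)) * hsum

theorem contiguousUltra_add_two {α γ : ℝ}
    (h : ∀ k : ℕ, k ≠ 0 → 2 * (k : ℝ) + 2 * α + γ ≠ 0) (n : ℕ) :
    contiguousUltra α γ (n + 2) = X * contiguousUltra α γ (n + 1) -
      C (gammaCoef α γ (n + 3)) * contiguousUltra α γ n := by
  have hadd := congrArg C (contiguousCoef_succ_add_gammaCoef h n)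
  have hmul := congrArg C (contiguousCoef_add_two_mul_gammaCoef α γ n)
  have hn := genUltra_succ (α + 1) γ n
  simp only [C_add, C_mul] at hadd hmul
  simp only [contiguousUltra, genUltra, Nat.add_sub_cancel, Nat.add_succ_sub_one]
  linear_combination X * genUltra (α + 1) γ n * hadd + genUltra (α + 1) γ (n - 1) * hmul -
    C (contiguousCoef α γ (n + 2)) * hn

theorem dunkl_contiguousUltra {α γ : ℝ}
    (h : ∀ k : ℕ, k ≠ 0 → 2 * (k : ℝ) + 2 * α + γ ≠ 0) : ∀ n : ℕ,
    dunkl γ (contiguousUltra α γ n) = C (dunklNumber γ (n + 1)) * genUltra (α + 1) γ n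
  | 0 => by
    have hX : contiguousUltra α γ 0 = X * 1 := by
      simp [contiguousUltra, contiguousCoef, dunklNumber_zero, genUltra]
    rw [hX, dunkl_X_mul, dunkl_one, zero_add, dunklNumber_of_odd γ odd_one]
    simp [genUltra]
  | 1 => by
    have hsq : contiguousUltra α γ 1 = X * (X * 1) - contiguousCoef α γ 1 • 1 := by
      simp [contiguousUltra, genUltra, smul_eq_C_mul]
    rw [hsq, map_sub, map_smul, dunkl_X_mul, dunkl_X_mul, dunkl_one,
      one_add_one_eq_two, dunklNumber_of_even γ even_two]
    simp only [mul_zero, zero_add, one_comp, mul_one, X_comp, smul_zero, sub_zero, genUltra,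
      Nat.cast_ofNat, C_ofNat]
    ring
  | n + 2 => by
    have hcoef := congrArg C (dunklNumber_add_three_mul_gammaCoef h n)
    have hsucc := congrArg C (dunklNumber_succ γ (n + 2))
    simp only [C_add, C_mul, C_sub, C_pow, C_neg, C_1] at hcoef hsucc
    rw [contiguousUltra_add_two h, ← smul_eq_C_mul, map_sub, map_smul, dunkl_X_mul,
      dunkl_contiguousUltra h n, dunkl_contiguousUltra h (n + 1), contiguousUltra_comp_neg_X,
      smul_eq_C_mul, genUltra]
    have hdef : contiguousUltra α γ (n + 1) = X * genUltra (α + 1) γ (n + 1) -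
      C (contiguousCoef α γ (n + 1)) * genUltra (α + 1) γ n := rfl
    linear_combination (C (dunklNumber γ (n + 3)) - C (dunklNumber γ (n + 2))) * hdef -
      contiguousUltra α γ (n + 1) * hsucc + genUltra (α + 1) γ n * hcoef

theorem genUltra_reversed_masses_general {α γ : ℝ}
    (h : ∀ k : ℕ, k ≠ 0 → 2 * (k : ℝ) + 2 * α + γ ≠ 0) (n : ℕ) :
    (∀ z₀ : ℝ, z₀ ≠ 0 → (contiguousUltra α γ n).eval z₀ = 0 →
      dunklNumber γ (n + 1) * (genUltra (α + 1) γ n).eval z₀ =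
        (derivative (contiguousUltra α γ n)).eval z₀) ∧
    (Even n → (contiguousUltra α γ n).eval 0 = 0) ∧
    dunklNumber γ (n + 1) * (genUltra (α + 1) γ n).eval 0 =
      (γ + 1) * (derivative (contiguousUltra α γ n)).eval 0 := by
  have hdunkl (x : ℝ) : dunklNumber γ (n + 1) * (genUltra (α + 1) γ n).eval x =
      (dunkl γ (contiguousUltra α γ n)).eval x := by
    rw [dunkl_contiguousUltra h, eval_mul, eval_C]
  refine ⟨fun z₀ hz₀ hroot => ?_, eval_zero_contiguousUltra_of_even α γ, ?_⟩
  · have hroot_neg : (contiguousUltra α γ n).eval (-z₀) = 0 := by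
      rw [eval_neg_contiguousUltra, hroot, mul_zero]
    rw [hdunkl, eval_dunkl_of_eval_eq_zero γ hz₀ hroot hroot_neg]
  · rw [hdunkl, eval_zero_dunkl, add_comm]

/-- **Masses of the reversed measure for the generalized ultraspherical polynomials
(forward direction of Theorem 2.3).**  With
`W(z) := z · Ŝ_{2m}^{(α+1,γ)}(z) - (2m/(2α+γ+4m)) · Ŝ_{2m-1}^{(α+1,γ)}(z)`:
(a) every real root `z₀ ≠ 0` of `W` satisfies
`(2m+γ+1) · Ŝ_{2m}^{(α+1,γ)}(z₀) = W'(z₀)`; and (b) `W(0) = 0` and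
`(2m+γ+1) · Ŝ_{2m}^{(α+1,γ)}(0) = (γ+1) · W'(0)`.  That is, the reversed measure
`ξ_{α,γ,2m}^{R*}` with Stieltjes transform `Ŝ_{2m}^{(α+1,γ)}/W` has equal masses
`1/(2m+γ+1)` at all support points different from `0` and mass `(γ+1)/(2m+γ+1)` at `0`. -/
theorem genUltra_reversed_masses (α γ : ℝ) (hα : -(1 / 2 : ℝ) < α) (hγ : -1 < γ)
    (m : ℕ) (hm : 1 ≤ m)
    (W : Polynomial ℝ)
    (hW : W = Polynomial.X * genUltra (α + 1) γ (2 * m) -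
      Polynomial.C (2 * (m : ℝ) / (2 * α + γ + 4 * m)) * genUltra (α + 1) γ (2 * m - 1)) :
    (∀ z₀ : ℝ, z₀ ≠ 0 → W.eval z₀ = 0 →
      (2 * (m : ℝ) + γ + 1) * (genUltra (α + 1) γ (2 * m)).eval z₀ =
        (Polynomial.derivative W).eval z₀) ∧
    W.eval 0 = 0 ∧
    (2 * (m : ℝ) + γ + 1) * (genUltra (α + 1) γ (2 * m)).eval 0 =
      (γ + 1) * (Polynomial.derivative W).eval 0 := by
  have hden (k : ℕ) (hk : k ≠ 0) : 2 * (k : ℝ) + 2 * α + γ ≠ 0 := by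
    have : (1 : ℝ) ≤ k := by exact_mod_cast Nat.one_le_iff_ne_zero.mpr hk
    linarith
  rw [← contiguousUltra_two_mul] at hW
  simpa [hW, dunklNumber_two_mul_add_one] using genUltra_reversed_masses_general hden (2 * m)
end

section
/- Let (γ_l)_{l≥1} be a sequence of reals with γ_l > −1 and lim_{l→∞} γ_l/l = c ≥ 0. For each l let K_l^{(γ_l)} be the monic generalized Hermite polynomial of degree l with parameter γ_l, and for y ∈ ℝ let N_l(y) denote the number of real zeros of K_l^{(γ_l)}, counted with multiplicity, that are ≤ y. Then for every y ∈ ℝ, lim_{l→∞} (1/l)·N_l(√l·y) = (1/π)·∫ over x ∈ (−∞, y] with (x² − c/2 − 1)² < c + 1 of √((c+1) − (x² − c/2 − 1)²) / |x| dx. -/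
open Polynomial MeasureTheory Filter

/-- The monic generalized Hermite polynomials `K_n^{(γ)}`, defined by `K 0 = 1`, `K 1 = X`
and `K_{n+1}(x) = x · K_n(x) - â_n · K_{n-1}(x)` where `â_n = n/2` for even `n` and
`â_n = (n+γ)/2` for odd `n`; they are orthogonal with respect to `|x|^γ exp(-x²)` on `ℝ`. -/
noncomputable def genHermite (γ : ℝ) : ℕ → Polynomial ℝ
  | 0 => 1
  | 1 => Polynomial.X
  | n + 2 =>
      Polynomial.X * genHermite γ (n + 1) -
        Polynomial.C (if Even (n + 1) then ((n : ℝ) + 1) / 2 else ((n : ℝ) + 1 + γ) / 2) *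
          genHermite γ n

/-!
The function `u(x) = |x| ^ (γ / 2) * exp (-x² / 2) * K_l(x)` has the zeros of `K_l` off the origin
and solves `u'' + Q u = 0`, where `Q(√l x) / l` tends to `V(x) = c + 2 - x² - c² / (4 x²)`.
Comparison with `v'' + k² v = 0` shows that the zeros divided by `√l` have, near each `x ≠ 0`, an
asymptotic density of at least `√V(x) / π`. This bound already has total mass `1`, whereas `K_l` has
at most `l` zeros; hence the bounds on the two sides of a point `y` leave no room for either of them
to be strict.

A local lower bound on the density integrates because a monotone function is differentiable almost
everywhere and grows at least by the integral of its derivative. The mass is that of a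
Marchenko–Pastur law, after the substitution `u = x²`.
-/

section SturmComparison

open Set Real

variable {u u' : ℝ → ℝ}

lemma hasDerivAt_wronskian {v v' : ℝ → ℝ} {q r x : ℝ}
    (hu : HasDerivAt u (u' x) x) (hu' : HasDerivAt u' (-q * u x) x)
    (hv : HasDerivAt v (v' x) x) (hv' : HasDerivAt v' (-r * v x) x) :
    HasDerivAt (fun x => u' x * v x - u x * v' x) ((r - q) * u x * v x) x :=
  ((hu'.mul hv).sub (hu.mul hv')).congr_deriv (by ring)

variable {Q : ℝ → ℝ} {a b : ℝ}

lemma exists_nonpos_of_sturm (hab : a < b)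
    (hu : ∀ x ∈ Icc a b, HasDerivAt u (u' x) x)
    (hu' : ∀ x ∈ Icc a b, HasDerivAt u' (-Q x * u x) x)
    (hQ : ∀ x ∈ Ioo a b, (π / (b - a)) ^ 2 < Q x) :
    ∃ x ∈ Ioo a b, u x ≤ 0 := by
  by_contra! hpos
  set k := π / (b - a)
  have hk : 0 < k := div_pos pi_pos (sub_pos.2 hab)
  have hkb : k * (b - a) = π := div_mul_cancel₀ _ (sub_pos.2 hab).ne'
  have hnonneg : ∀ x ∈ Icc a b, 0 ≤ u x := by
    rw [← closure_Ioo hab.ne]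
    refine fun x hx => le_on_closure (fun y hy => (hpos y hy).le) continuousOn_const ?_ hx
    rw [closure_Ioo hab.ne]
    exact HasDerivAt.continuousOn hu
  have hwronskian : ∀ x ∈ Icc a b,
      HasDerivAt (fun x => u' x * sin (k * (x - a)) - u x * (k * cos (k * (x - a))))
        ((k ^ 2 - Q x) * u x * sin (k * (x - a))) x := by
    intro x hx
    have hlin : HasDerivAt (fun x => k * (x - a)) k x := by
      simpa using ((hasDerivAt_id x).sub_const a).const_mul k
    exact hasDerivAt_wronskian (hu x hx) (hu' x hx) (hlin.sin.congr_deriv (mul_comm _ _))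
      ((hlin.cos.const_mul k).congr_deriv (by ring))
  have hanti := strictAntiOn_of_deriv_neg (convex_Icc a b)
      (HasDerivAt.continuousOn hwronskian) fun x hx => by
    rw [interior_Icc] at hx
    rw [(hwronskian x (Ioo_subset_Icc_self hx)).deriv]
    have hsin : 0 < sin (k * (x - a)) := by
      refine sin_pos_of_pos_of_lt_pi (mul_pos hk (sub_pos.2 hx.1)) (hkb ▸ ?_)
      gcongr
      exact hx.2
    exact mul_neg_of_neg_of_pos (mul_neg_of_neg_of_pos (sub_neg.2 (hQ x hx)) (hpos x hx)) hsin
  have hlt := hanti (left_mem_Icc.2 hab.le) (right_mem_Icc.2 hab.le) hab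
  simp only [hkb, sub_self, mul_zero, sin_pi, cos_pi, sin_zero, cos_zero] at hlt
  nlinarith [hnonneg a (left_mem_Icc.2 hab.le), hnonneg b (right_mem_Icc.2 hab.le)]

lemma exists_zero_of_sturm (hab : a < b)
    (hu : ∀ x ∈ Icc a b, HasDerivAt u (u' x) x)
    (hu' : ∀ x ∈ Icc a b, HasDerivAt u' (-Q x * u x) x)
    (hQ : ∀ x ∈ Ioo a b, (π / (b - a)) ^ 2 < Q x) :
    ∃ x ∈ Ioo a b, u x = 0 := by
  obtain ⟨x, hx, hux⟩ := exists_nonpos_of_sturm hab hu hu' hQ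
  obtain ⟨y, hy, huy⟩ := exists_nonpos_of_sturm hab (fun x hx => (hu x hx).neg)
    (fun x hx => (hu' x hx).neg.congr_deriv (mul_neg _ _).symm) hQ
  exact isPreconnected_Ioo.intermediate_value hx hy
    ((HasDerivAt.continuousOn hu).mono Ioo_subset_Icc_self) ⟨hux, neg_nonpos.1 huy⟩

lemma hasDerivAt_liouville_transform {g y y' p : ℝ → ℝ} {p' q x : ℝ}
    (hg : HasDerivAt g (p x / 2 * g x) x) (hp : HasDerivAt p p' x)
    (hy : HasDerivAt y (y' x) x) (hy' : HasDerivAt y' (-(p x * y' x + q * y x)) x) :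
    HasDerivAt (fun t => g t * (p t / 2 * y t + y' t))
      (-(q - p x ^ 2 / 4 - p' / 2) * (g x * y x)) x :=
  (hg.mul (((hp.div_const 2).mul hy).add hy')).congr_deriv <| by
    simp only [Pi.add_apply, Pi.mul_apply]
    ring

end SturmComparison

section Counting

open Set

lemma card_filter_le_lt_card_filter_le {α : Type*} [LinearOrder α] {M : Multiset α} {x y z : α}
    (hz : z ∈ M) (hxz : x < z) (hzy : z ≤ y) :
    (M.filter (· ≤ x)).card < (M.filter (· ≤ y)).card := by
  have hle : M.filter (· ≤ x) ≤ M.filter (· ≤ y) :=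
    Multiset.monotone_filter_right M fun _ h => h.trans (hxz.le.trans hzy)
  refine Multiset.card_lt_card <| lt_of_le_of_ne hle fun heq => hxz.not_ge ?_
  have hzx : z ∈ M.filter (· ≤ x) := heq ▸ Multiset.mem_filter.2 ⟨hz, hzy⟩
  exact (Multiset.mem_filter.1 hzx).2

lemma div_sub_one_le_card_filter_le_sub {M : Multiset ℝ} {a b h : ℝ} (hh : 0 < h) (hab : a ≤ b)
    (hM : ∀ x, a ≤ x → x + h ≤ b → ∃ z ∈ M, z ∈ Ioo x (x + h)) :
    (b - a) / h - 1 ≤ (M.filter (· ≤ b)).card - (M.filter (· ≤ a)).card := by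
  have hcount : ∀ n : ℕ, a + n * h ≤ b →
      (M.filter (· ≤ a)).card + n ≤ (M.filter (· ≤ a + n * h)).card := by
    intro n
    induction n with
    | zero => intro _; rw [Nat.cast_zero, zero_mul, add_zero, add_zero]
    | succ n ih =>
      have hsucc : a + (n + 1 : ℕ) * h = a + n * h + h := by push_cast; ring
      rw [hsucc]
      intro hb
      obtain ⟨z, hzM, hz⟩ := hM (a + n * h) (le_add_of_nonneg_right (by positivity)) hb
      exact (Nat.succ_le_succ (ih (by linarith))).trans
        (card_filter_le_lt_card_filter_le hzM hz.1 hz.2.le)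
  have hfloor : a + ⌊(b - a) / h⌋₊ * h ≤ b := by
    rw [← le_sub_iff_add_le', ← le_div_iff₀ hh]
    exact Nat.floor_le (div_nonneg (sub_nonneg.2 hab) hh.le)
  have hle : (M.filter (· ≤ a)).card + ⌊(b - a) / h⌋₊ ≤ (M.filter (· ≤ b)).card :=
    (hcount _ hfloor).trans <| Multiset.card_le_card <|
      Multiset.monotone_filter_right M fun _ hx => hx.trans hfloor
  have hcast : ((M.filter (· ≤ a)).card : ℝ) + ⌊(b - a) / h⌋₊ ≤ (M.filter (· ≤ b)).card := by
    exact_mod_cast hle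
  linarith [Nat.lt_floor_add_one ((b - a) / h)]

end Counting

section AsymptoticDensity

open Set Topology

variable {f : ℝ → ℝ} {a b : ℝ}

lemma intervalIntegral_le_sub_of_monotone {G : ℝ → ℝ} (hab : a ≤ b) (hG : Monotone G)
    (hf : IntervalIntegrable f volume a b)
    (hGf : ∀ᵐ t, ∀ k < f t, ∀ᶠ s in 𝓝[>] t, k * (s - t) ≤ G s - G t) :
    ∫ t in a..b, f t ≤ G b - G a := by
  have hderiv : f ≤ᵐ[volume] deriv G := by
    filter_upwards [hG.ae_differentiableAt, hGf] with t hdiff ht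
    refine le_of_forall_lt fun k hk => ?_
    obtain ⟨k', hkk', hk'⟩ := exists_between hk
    refine hkk'.trans_le <| ge_of_tendsto
      ((hasDerivAt_iff_tendsto_slope_left_right.1 hdiff.hasDerivAt).2) ?_
    filter_upwards [ht k' hk', self_mem_nhdsWithin] with s hs hts
    rwa [slope_def_field, le_div_iff₀ (sub_pos.2 hts)]
  have hmono := hG.monotoneOn (uIcc a b)
  calc ∫ t in a..b, f t ≤ ∫ t in a..b, deriv G t :=
        intervalIntegral.integral_mono_ae hab hf hmono.intervalIntegrable_deriv hderiv
    _ ≤ G b - G a := by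
        have h := hmono.intervalIntegral_deriv_mem_uIcc
        rw [uIcc_of_le (sub_nonneg.2 (hG hab))] at h
        exact h.2

variable {ι : Type*} {L : Filter ι} {F : ι → ℝ → ℝ}

/-- The increments of the functions `F i` over short intervals near almost every point `t` are
eventually at least `k` times the length, for each `k < f t`. How far along `L` one has to go may
depend on the interval. -/
def HasAsymptoticLowerDensity (L : Filter ι) (F : ι → ℝ → ℝ) (f : ℝ → ℝ) : Prop :=
  ∀ᵐ t, ∀ k < f t, ∀ᶠ s in 𝓝[>] t, ∀ᶠ i in L, k * (s - t) ≤ F i s - F i t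

lemma intervalIntegral_le_liminf_sub [L.NeBot] (hab : a ≤ b)
    (hmono : ∀ i, Monotone (F i)) (hF : ∀ i t, F i t ∈ Icc 0 1)
    (hf : IntervalIntegrable f volume a b)
    (hFf : HasAsymptoticLowerDensity L F f) :
    ∫ t in a..b, f t ≤ liminf (fun i => F i b - F i a) L := by
  set G : ℝ → ℝ := fun t => liminf (fun i => F i t - F i a) L with hGdef
  have hbelow : ∀ t, IsBoundedUnder (· ≥ ·) L fun i => F i t - F i a := fun t =>
    isBoundedUnder_of ⟨-1, fun i => by linarith [(hF i t).1, (hF i a).2]⟩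
  have habove : ∀ t, IsBoundedUnder (· ≤ ·) L fun i => F i t - F i a := fun t =>
    isBoundedUnder_of ⟨1, fun i => by linarith [(hF i t).2, (hF i a).1]⟩
  have hG : ∀ t s d, (∀ᶠ i in L, d ≤ F i s - F i t) → d ≤ G s - G t := by
    intro t s d hd
    rw [le_sub_iff_add_le']
    refine le_of_forall_lt fun m hm => ?_
    obtain ⟨m', hm', hmG⟩ := exists_between (sub_lt_iff_lt_add.2 hm)
    refine (sub_lt_iff_lt_add.1 hm').trans_le <|
      le_liminf_of_le (habove s).isCoboundedUnder_ge ?_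
    filter_upwards [hd, eventually_lt_of_lt_liminf hmG (hbelow t)] with i hi hmi
    linarith
  have hGmono : Monotone G := fun t s hts =>
    sub_nonneg.1 <| hG t s 0 <| Eventually.of_forall fun i => sub_nonneg.2 (hmono i hts)
  have hGa : G a = 0 := by simp only [hGdef, sub_self, liminf_const]
  have hint := intervalIntegral_le_sub_of_monotone hab hGmono hf <| hFf.mono fun t ht k hk =>
    (ht k hk).mono fun s => hG t s _
  rwa [hGa, sub_zero] at hint

lemma tendsto_setIntegral_Iic_of_hasAsymptoticLowerDensity [L.NeBot]
    (hmono : ∀ i, Monotone (F i)) (hF : ∀ i t, F i t ∈ Icc 0 1) (hf : ∫ t, f t = 1)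
    (hFf : HasAsymptoticLowerDensity L F f) (y : ℝ) :
    Tendsto (fun i => F i y) L (𝓝 (∫ t in Iic y, f t)) := by
  have hint := integrable_of_integral_eq_one hf
  have hlower : ∀ a b m, a ≤ b → m < ∫ t in a..b, f t → ∀ᶠ i in L, m < F i b - F i a := by
    intro a b m hab hm
    refine eventually_lt_of_lt_liminf (hm.trans_le <|
      intervalIntegral_le_liminf_sub hab hmono hF hint.intervalIntegrable hFf) ?_
    exact isBoundedUnder_of ⟨0, fun i => sub_nonneg.2 (hmono i hab)⟩
  refine tendsto_order.2 ⟨fun m hm => ?_, fun m hm => ?_⟩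
  · obtain ⟨a, hma, hay⟩ := ((intervalIntegral_tendsto_integral_Iic y hint.integrableOn tendsto_id
      |>.eventually_const_lt hm).and (eventually_le_atBot y)).exists
    filter_upwards [hlower a y m hay hma] with i hi
    linarith [(hF i a).1]
  · have hcompl : 1 - m < ∫ t in Ioi y, f t := by
      linarith [intervalIntegral.integral_Iic_add_Ioi (b := y) hint.integrableOn hint.integrableOn]
    obtain ⟨b, hmb, hyb⟩ := ((intervalIntegral_tendsto_integral_Ioi y hint.integrableOn tendsto_id
      |>.eventually_const_lt hcompl).and (eventually_ge_atTop y)).exists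
    filter_upwards [hlower y b (1 - m) hyb hmb] with i hi
    linarith [(hF i b).2]

end AsymptoticDensity

section MarchenkoPastur

open Set Real

variable {m r q u : ℝ}

lemma hasDerivAt_arcsin_sub_div (hr : 0 < r) (hu : u ∈ Ioo (m - r) (m + r)) :
    HasDerivAt (fun u => arcsin ((u - m) / r)) (1 / √(r ^ 2 - (u - m) ^ 2)) u := by
  have hlower : -1 < (u - m) / r := by rw [lt_div_iff₀ hr]; linarith [hu.1]
  have hupper : (u - m) / r < 1 := by rw [div_lt_one hr]; linarith [hu.2]
  have hsqrt : √(1 - ((u - m) / r) ^ 2) = √(r ^ 2 - (u - m) ^ 2) / r := by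
    rw [div_pow, one_sub_div (by positivity), sqrt_div' _ (by positivity), sqrt_sq hr.le]
  refine ((hasDerivAt_arcsin hlower.ne' hupper.ne).comp u
    (((hasDerivAt_id' u).sub_const m).div_const r)).congr_deriv ?_
  rw [hsqrt]
  field_simp

lemma sq_sub_sub_sq_pos (hu : u ∈ Ioo (m - r) (m + r)) : 0 < r ^ 2 - (u - m) ^ 2 :=
  sub_pos.2 (sq_lt_sq' (by linarith [hu.1]) (by linarith [hu.2]))

lemma sq_sub_sq_div_sub_sq (hq : q ^ 2 = m ^ 2 - r ^ 2) (hu : u ≠ 0) :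
    r ^ 2 - (q ^ 2 / u - m) ^ 2 = (q / u) ^ 2 * (r ^ 2 - (u - m) ^ 2) := by
  field_simp
  linear_combination (u ^ 2 - q ^ 2) * hq

lemma sq_div_mem_Ioo (hr : 0 < r) (hq₀ : q ≠ 0) (hq : q ^ 2 = m ^ 2 - r ^ 2)
    (hu₀ : u ≠ 0) (hu : u ∈ Ioo (m - r) (m + r)) : q ^ 2 / u ∈ Ioo (m - r) (m + r) := by
  have hw : 0 < r ^ 2 - (q ^ 2 / u - m) ^ 2 := by
    have := sq_sub_sub_sq_pos hu
    rw [sq_sub_sq_div_sub_sq hq hu₀]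
    positivity
  have := abs_lt_of_sq_lt_sq' (sub_pos.1 hw) hr.le
  constructor <;> linarith

lemma hasDerivAt_arcsin_sq_div (hr : 0 < r) (hq₀ : 0 < q) (hq : q ^ 2 = m ^ 2 - r ^ 2)
    (hu₀ : 0 < u) (hu : u ∈ Ioo (m - r) (m + r)) :
    HasDerivAt (fun u => arcsin ((q ^ 2 / u - m) / r))
      (-q / (u * √(r ^ 2 - (u - m) ^ 2))) u := by
  have hinv : HasDerivAt (fun u => q ^ 2 / u) (-q ^ 2 / u ^ 2) u :=
    ((hasDerivAt_inv hu₀.ne').const_mul (q ^ 2)).congr_deriv (by ring)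
  refine ((hasDerivAt_arcsin_sub_div hr
    (sq_div_mem_Ioo hr hq₀.ne' hq hu₀.ne' hu)).comp u hinv).congr_deriv ?_
  rw [sq_sub_sq_div_sub_sq hq hu₀.ne', sqrt_mul (by positivity), sqrt_sq (by positivity)]
  field_simp

/-- A primitive of `u ↦ √(r² - (u - m)²) / u` on `(m - r, m + r)` for `q = √(m² - r²)`, used to
compute the mass of the Marchenko–Pastur density. Its last term is an arcsine composed with the
inversion `u ↦ q² / u`, which exchanges `m - r` and `m + r`. -/
noncomputable def marchenkoPasturPrimitive (m r q u : ℝ) : ℝ :=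
  √(r ^ 2 - (u - m) ^ 2) + m * arcsin ((u - m) / r) + q * arcsin ((q ^ 2 / u - m) / r)

lemma hasDerivAt_marchenkoPasturPrimitive (hr : 0 < r) (hq₀ : 0 ≤ q) (hq : q ^ 2 = m ^ 2 - r ^ 2)
    (hu₀ : 0 < u) (hu : u ∈ Ioo (m - r) (m + r)) :
    HasDerivAt (marchenkoPasturPrimitive m r q) (√(r ^ 2 - (u - m) ^ 2) / u) u := by
  have hw := sq_sub_sub_sq_pos hu
  have hsqrt : HasDerivAt (fun u => √(r ^ 2 - (u - m) ^ 2))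
      (-(u - m) / √(r ^ 2 - (u - m) ^ 2)) u := by
    have hsq : HasDerivAt (fun u => r ^ 2 - (u - m) ^ 2) (-(2 * (u - m))) u := by
      simpa using (((hasDerivAt_id' u).sub_const m).fun_pow 2).const_sub (r ^ 2)
    exact (hsq.sqrt hw.ne').congr_deriv (by ring)
  have hinv : HasDerivAt (fun u => q * arcsin ((q ^ 2 / u - m) / r))
      (-q ^ 2 / (u * √(r ^ 2 - (u - m) ^ 2))) u := by
    rcases hq₀.eq_or_lt with rfl | hq₀
    · simpa using hasDerivAt_const u (0 : ℝ)
    · exact ((hasDerivAt_arcsin_sq_div hr hq₀ hq hu₀ hu).const_mul q).congr_deriv (by ring)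
  refine ((hsqrt.add ((hasDerivAt_arcsin_sub_div hr hu).const_mul m)).add hinv).congr_deriv ?_
  have := sqrt_pos.2 hw
  field_simp
  rw [sq_sqrt hw.le]
  linear_combination -hq

lemma continuousOn_marchenkoPasturPrimitive (hrm : r ≤ m) (hq : q ^ 2 = m ^ 2 - r ^ 2) :
    ContinuousOn (marchenkoPasturPrimitive m r q) (Icc (m - r) (m + r)) := by
  have hinv : ContinuousOn (fun u => q * arcsin ((q ^ 2 / u - m) / r)) (Icc (m - r) (m + r)) := by
    rcases eq_or_ne q 0 with rfl | hq₀
    · simpa using continuousOn_const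
    · have hne : ∀ u ∈ Icc (m - r) (m + r), u ≠ 0 := by
        rintro u hu rfl
        have hmr : m = r := by linarith [hu.1]
        exact hq₀ <| pow_eq_zero_iff two_ne_zero |>.1 <| by rw [hq, hmr, sub_self]
      exact continuousOn_const.mul <| continuous_arcsin.comp_continuousOn <|
        ((continuousOn_const.div continuousOn_id hne).sub continuousOn_const).div_const r
  exact ContinuousOn.add (by fun_prop) hinv

lemma marchenkoPasturPrimitive_add (hr : 0 < r) (hrm : r ≤ m) (hq : q ^ 2 = m ^ 2 - r ^ 2) :
    marchenkoPasturPrimitive m r q (m + r) = (m - q) * (π / 2) := by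
  have hquot : q ^ 2 / (m + r) - m = -r := by
    have : m + r ≠ 0 := by linarith
    rw [hq]
    field_simp
    ring
  rw [marchenkoPasturPrimitive, hquot, add_sub_cancel_left, sub_self, sqrt_zero, neg_div,
    div_self hr.ne', arcsin_neg, arcsin_one]
  ring

lemma marchenkoPasturPrimitive_sub (hr : 0 < r) (hq : q ^ 2 = m ^ 2 - r ^ 2) :
    marchenkoPasturPrimitive m r q (m - r) = -((m - q) * (π / 2)) := by
  have hinv : q * arcsin ((q ^ 2 / (m - r) - m) / r) = q * (π / 2) := by
    rcases eq_or_ne q 0 with rfl | hq₀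
    · rw [zero_mul, zero_mul]
    · have hmr : m - r ≠ 0 := fun h => hq₀ <| pow_eq_zero_iff two_ne_zero |>.1 <| by
        rw [hq]
        linear_combination (m + r) * h
      have hquot : q ^ 2 / (m - r) - m = r := by
        rw [hq]
        field_simp
        ring
      rw [hquot, div_self hr.ne', arcsin_one]
  rw [marchenkoPasturPrimitive, hinv, sub_sub_cancel_left, neg_sq, sub_self, sqrt_zero, neg_div,
    div_self hr.ne', arcsin_neg, arcsin_one]
  ring

lemma integral_marchenkoPastur (hr : 0 < r) (hrm : r ≤ m) (hq₀ : 0 ≤ q)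
    (hq : q ^ 2 = m ^ 2 - r ^ 2) :
    ∫ u in (m - r)..(m + r), √(r ^ 2 - (u - m) ^ 2) / u = π * (m - q) := by
  have hle : m - r ≤ m + r := by linarith
  have hpos : ∀ u ∈ Ioo (m - r) (m + r), 0 < u := fun u hu => (sub_nonneg.2 hrm).trans_lt hu.1
  have hcont := continuousOn_marchenkoPasturPrimitive hrm hq
  have hderiv := fun u hu =>
    hasDerivAt_marchenkoPasturPrimitive hr hq₀ hq (hpos u hu) hu
  have hint := (intervalIntegrable_iff_integrableOn_Ioc_of_le hle).2 <|
    intervalIntegral.integrableOn_deriv_of_nonneg hcont hderiv fun u hu =>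
      div_nonneg (sqrt_nonneg _) (hpos u hu).le
  rw [intervalIntegral.integral_eq_sub_of_hasDerivAt_of_le hle hcont hderiv hint,
    marchenkoPasturPrimitive_add hr hrm hq, marchenkoPasturPrimitive_sub hr hq]
  ring

lemma integral_Ioi_marchenkoPastur (hr : 0 < r) (hrm : r ≤ m) (hq₀ : 0 ≤ q)
    (hq : q ^ 2 = m ^ 2 - r ^ 2) :
    ∫ u in Ioi 0, √(r ^ 2 - (u - m) ^ 2) / u = π * (m - q) := by
  rw [← integral_marchenkoPastur hr hrm hq₀ hq, intervalIntegral.integral_of_le (by linarith)]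
  refine setIntegral_eq_of_subset_of_forall_sdiff_eq_zero measurableSet_Ioi
    (fun u hu => (sub_nonneg.2 hrm).trans_lt hu.1) fun u hu => ?_
  have hw : r ^ 2 - (u - m) ^ 2 ≤ 0 := by
    contrapose! hu
    have := abs_lt_of_sq_lt_sq' (sub_pos.1 hu) hr.le
    exact fun h => h.2 ⟨by linarith, by linarith⟩
  rw [sqrt_eq_zero_of_nonpos hw, zero_div]

end MarchenkoPastur

/-- The term `θ_n` in `2 â_n = n + θ_n`, where `â_n` is the recurrence coefficient of the
generalized Hermite polynomials. -/
noncomputable def genHermiteShift (γ : ℝ) (n : ℕ) : ℝ := if Even n then 0 else γ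

lemma genHermiteShift_zero (γ : ℝ) : genHermiteShift γ 0 = 0 := if_pos Even.zero

lemma genHermiteShift_succ (γ : ℝ) (n : ℕ) :
    genHermiteShift γ (n + 1) = γ - genHermiteShift γ n := by
  by_cases h : Even n <;> simp [genHermiteShift, Nat.even_add_one, h]

lemma genHermiteShift_sq (γ : ℝ) (n : ℕ) :
    genHermiteShift γ n ^ 2 = γ * genHermiteShift γ n := by
  by_cases h : Even n <;> simp [genHermiteShift, h, sq]

lemma abs_genHermiteShift_le (γ : ℝ) (n : ℕ) : |genHermiteShift γ n| ≤ |γ| := by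
  by_cases h : Even n <;> simp [genHermiteShift, h]

/-- The recurrence coefficient `â_n` of the generalized Hermite polynomials. -/
noncomputable def genHermiteCoeff (γ : ℝ) (n : ℕ) : ℝ := (n + genHermiteShift γ n) / 2

lemma two_mul_C_genHermiteCoeff (γ : ℝ) (n : ℕ) :
    2 * C (genHermiteCoeff γ n) = (n : ℝ[X]) + C (genHermiteShift γ n) := by
  rw [← C_ofNat, ← C_mul, genHermiteCoeff, mul_div_cancel₀ _ two_ne_zero, C_add, C_eq_natCast]

lemma genHermite_add_two (γ : ℝ) (n : ℕ) :
    genHermite γ (n + 2) =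
      X * genHermite γ (n + 1) - C (genHermiteCoeff γ (n + 1)) * genHermite γ n := by
  rw [genHermite, genHermiteCoeff, genHermiteShift]
  split_ifs <;> simp

lemma isMonicOfDegree_genHermite (γ : ℝ) (n : ℕ) : IsMonicOfDegree (genHermite γ n) n := by
  induction n using Nat.twoStepInduction with
  | zero => exact isMonicOfDegree_zero_iff.2 rfl
  | one => exact isMonicOfDegree_X ℝ
  | more n ih₀ ih₁ =>
    rw [genHermite_add_two]
    refine (show n + 2 = 1 + (n + 1) by ring) ▸ ((isMonicOfDegree_X ℝ).mul ih₁).sub ?_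
    have hdeg := natDegree_C_mul_le (genHermiteCoeff γ (n + 1)) (genHermite γ n)
    rw [ih₀.natDegree_eq] at hdeg
    lia

lemma X_mul_derivative_genHermite (γ : ℝ) (n : ℕ) :
    X * derivative (genHermite γ n) =
      (2 * X ^ 2 - C (genHermiteShift γ n)) * genHermite γ n - 2 * X * genHermite γ (n + 1) := by
  induction n using Nat.twoStepInduction with
  | zero =>
    simp only [genHermite, genHermiteShift_zero, derivative_one, C_0]
    ring
  | one =>
    have coeff₁ := two_mul_C_genHermiteCoeff γ 1
    rw [genHermite_add_two]
    simp only [genHermite, zero_add, derivative_X, Nat.cast_one] at coeff₁ ⊢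
    linear_combination -X * coeff₁
  | more n ih₀ ih₁ =>
    have rec₂ := genHermite_add_two γ n
    have rec₃ : genHermite γ (n + 3) = _ := genHermite_add_two γ (n + 1)
    have coeff₁ := two_mul_C_genHermiteCoeff γ (n + 1)
    have coeff₂ := two_mul_C_genHermiteCoeff γ (n + 2)
    have hshift : C (genHermiteShift γ (n + 2)) = C (genHermiteShift γ n) := by
      rw [genHermiteShift_succ, genHermiteShift_succ, sub_sub_cancel]
    have hder := congrArg derivative rec₂
    simp only [derivative_sub, derivative_mul, derivative_X, derivative_C] at hder
    rw [hshift] at coeff₂ ⊢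
    push_cast at coeff₁ coeff₂
    linear_combination X * hder + X * ih₁ - C (genHermiteCoeff γ (n + 1)) * ih₀ -
      (2 * X ^ 2 - C (genHermiteShift γ n)) * rec₂ + 2 * X * rec₃ +
      X * genHermite γ (n + 1) * (coeff₁ - coeff₂)

lemma X_mul_derivative_genHermite_succ (γ : ℝ) (n : ℕ) :
    X * derivative (genHermite γ (n + 1)) + C (genHermiteShift γ (n + 1)) * genHermite γ (n + 1) =
      2 * C (genHermiteCoeff γ (n + 1)) * X * genHermite γ n := by
  linear_combination X_mul_derivative_genHermite γ (n + 1) - 2 * X * genHermite_add_two γ n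

lemma genHermite_ode (γ : ℝ) (n : ℕ) :
    X ^ 2 * derivative (derivative (genHermite γ n)) +
      (C γ * X - 2 * X ^ 3) * derivative (genHermite γ n) +
      (2 * (n : ℝ[X]) * X ^ 2 - C (genHermiteShift γ n)) * genHermite γ n = 0 := by
  have raise := X_mul_derivative_genHermite γ n
  have lower := X_mul_derivative_genHermite_succ γ n
  have coeff := two_mul_C_genHermiteCoeff γ (n + 1)
  have hshift : C (genHermiteShift γ (n + 1)) = C γ - C (genHermiteShift γ n) := by
    rw [genHermiteShift_succ, C_sub]
  have hsq : C (genHermiteShift γ n) ^ 2 = C γ * C (genHermiteShift γ n) := by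
    rw [← C_pow, genHermiteShift_sq, C_mul]
  have hder := congrArg derivative raise
  simp only [derivative_sub, derivative_mul, derivative_X, derivative_C, derivative_X_sq,
    derivative_ofNat, C_ofNat] at hder
  rw [hshift] at lower coeff
  push_cast at coeff
  linear_combination X * hder - 2 * X * lower - (1 - C γ + C (genHermiteShift γ n)) * raise -
    2 * X ^ 2 * genHermite γ n * coeff + genHermite γ n * hsq

section Zeros

open Set Real Topology

/-- The coefficient `Q` in the equation `u'' + Q u = 0` solved by
`u(x) = |x| ^ (γ / 2) * exp (-x² / 2) * K_n^{(γ)}(x)`. -/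
noncomputable def genHermitePotential (γ : ℝ) (n : ℕ) (x : ℝ) : ℝ :=
  2 * n + 1 + γ - x ^ 2 - (γ ^ 2 / 4 - γ / 2 + genHermiteShift γ n) / x ^ 2

lemma eval_derivative_derivative_genHermite (γ : ℝ) (n : ℕ) {x : ℝ} (hx : x ≠ 0) :
    (derivative (derivative (genHermite γ n))).eval x =
      -((γ / x - 2 * x) * (derivative (genHermite γ n)).eval x +
        (2 * n - genHermiteShift γ n / x ^ 2) * (genHermite γ n).eval x) := by
  have hode := congrArg (eval x) (genHermite_ode γ n)
  simp only [eval_add, eval_sub, eval_mul, eval_pow, eval_X, eval_C, eval_natCast, eval_ofNat,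
    eval_zero] at hode
  field_simp
  linear_combination hode

lemma exists_mem_roots_genHermite {γ a b : ℝ} {n : ℕ} (hab : a < b) (h₀ : 0 ∉ Icc a b)
    (hQ : ∀ x ∈ Ioo a b, (π / (b - a)) ^ 2 < genHermitePotential γ n x) :
    ∃ z ∈ (genHermite γ n).roots, z ∈ Ioo a b := by
  set K := genHermite γ n
  -- `g x = |x| ^ (γ / 2) * exp (-x² / 2)` on both half-lines, because `Real.log x = log |x|`.
  set g : ℝ → ℝ := fun x => exp (γ / 2 * log x - x ^ 2 / 2)
  set p : ℝ → ℝ := fun x => γ / x - 2 * x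
  have hp : ∀ x ∈ Icc a b, HasDerivAt p (-γ / x ^ 2 - 2) x := fun x hx =>
    (((hasDerivAt_inv (ne_of_mem_of_not_mem hx h₀)).const_mul γ).sub
      ((hasDerivAt_id' x).const_mul 2)).congr_deriv (by ring)
  have hg : ∀ x ∈ Icc a b, HasDerivAt g (p x / 2 * g x) x := fun x hx =>
    (((hasDerivAt_log (ne_of_mem_of_not_mem hx h₀)).const_mul (γ / 2)).fun_sub
      ((hasDerivAt_pow 2 x).div_const 2)).exp.congr_deriv (by simp only [p, g]; push_cast; ring)
  have hu : ∀ x ∈ Icc a b,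
      HasDerivAt (fun t => g t * K.eval t) (g x * (p x / 2 * K.eval x + K.derivative.eval x)) x :=
    fun x hx => ((hg x hx).mul (K.hasDerivAt x)).congr_deriv (by ring)
  have hu' : ∀ x ∈ Icc a b,
      HasDerivAt (fun t => g t * (p t / 2 * K.eval t + K.derivative.eval t))
        (-genHermitePotential γ n x * (g x * K.eval x)) x := by
    intro x hx
    have hx₀ : x ≠ 0 := ne_of_mem_of_not_mem hx h₀
    refine (hasDerivAt_liouville_transform (hg x hx) (hp x hx) (K.hasDerivAt x)
      ((K.derivative.hasDerivAt x).congr_deriv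
        (eval_derivative_derivative_genHermite γ n hx₀))).congr_deriv ?_
    simp only [genHermitePotential, p]
    field
  obtain ⟨z, hz, hgz⟩ := exists_zero_of_sturm hab hu hu' hQ
  exact ⟨z, (mem_roots (isMonicOfDegree_genHermite γ n).ne_zero).2
    ((mul_eq_zero.1 hgz).resolve_left (exp_ne_zero _)), hz⟩

/-- The limit of `genHermitePotential (γ l) l (√l * x) / l` when `γ l / l → c`. -/
noncomputable def genHermiteLimitPotential (c x : ℝ) : ℝ := c + 2 - x ^ 2 - c ^ 2 / 4 / x ^ 2

variable {γ : ℕ → ℝ} {c : ℝ}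

lemma tendsto_genHermiteShift_div_sq (hlim : Tendsto (fun l : ℕ => γ l / l) atTop (𝓝 c)) :
    Tendsto (fun l : ℕ => genHermiteShift (γ l) l / l ^ 2) atTop (𝓝 0) := by
  have hbound := hlim.abs.mul tendsto_one_div_atTop_nhds_zero_nat
  rw [mul_zero] at hbound
  refine squeeze_zero_norm (fun l => ?_) hbound
  calc ‖genHermiteShift (γ l) l / (l : ℝ) ^ 2‖ = |genHermiteShift (γ l) l| / (l : ℝ) ^ 2 := by
        rw [norm_div, norm_eq_abs, norm_of_nonneg (sq_nonneg (l : ℝ))]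
    _ ≤ |γ l| / (l : ℝ) ^ 2 :=
        div_le_div_of_nonneg_right (abs_genHermiteShift_le _ _) (sq_nonneg _)
    _ = |γ l / l| * (1 / l) := by rw [abs_div, Nat.abs_cast]; ring

lemma eventually_lt_genHermitePotential (hlim : Tendsto (fun l : ℕ => γ l / l) atTop (𝓝 c))
    {K : Set ℝ} (hK : IsCompact K) (h₀ : 0 ∉ K) {k : ℝ}
    (hk : ∀ t ∈ K, k < genHermiteLimitPotential c t) :
    ∀ᶠ l : ℕ in atTop, ∀ t ∈ K, l * k < genHermitePotential (γ l) l (√l * t) := by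
  have hinv := tendsto_one_div_atTop_nhds_zero_nat (𝕜 := ℝ)
  have hα : Tendsto (fun l : ℕ => 2 + 1 / (l : ℝ) + γ l / l) atTop (𝓝 (c + 2)) := by
    simpa [add_comm] using (hinv.const_add 2).add hlim
  have hβ : Tendsto (fun l : ℕ => (γ l / l) ^ 2 / 4 - γ l / l * (1 / l) / 2 +
      genHermiteShift (γ l) l / l ^ 2) atTop (𝓝 (c ^ 2 / 4)) := by
    simpa using (((hlim.pow 2).div_const 4).sub ((hlim.mul hinv).div_const 2)).add
      (tendsto_genHermiteShift_div_sq hlim)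
  have hnhds : ∀ᶠ αβ : ℝ × ℝ in 𝓝 (c + 2, c ^ 2 / 4), ∀ t ∈ K, k < αβ.1 - t ^ 2 - αβ.2 / t ^ 2 := by
    refine hK.eventually_forall_of_forall_eventually fun t ht => ?_
    have ht₀ : t ^ 2 ≠ 0 := pow_ne_zero 2 (ne_of_mem_of_not_mem ht h₀)
    have hcont : ContinuousAt (fun z : (ℝ × ℝ) × ℝ => z.1.1 - z.2 ^ 2 - z.1.2 / z.2 ^ 2)
        ((c + 2, c ^ 2 / 4), t) := by fun_prop (disch := exact ht₀)
    exact hcont.tendsto.eventually_const_lt (hk t ht)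
  filter_upwards [(hα.prodMk_nhds hβ).eventually hnhds, eventually_gt_atTop 0] with l hl hl₀ t ht
  have hl₀' : (0 : ℝ) < l := Nat.cast_pos.2 hl₀
  refine (mul_lt_mul_of_pos_left (hl t ht) hl₀').trans_eq ?_
  rw [genHermitePotential, mul_pow, sq_sqrt hl₀'.le]
  field

/-- The proportion `N_n(√n y) / n` of zeros of `K_n^{(γ)}`, counted with multiplicity, that are at
most `√n y`. -/
noncomputable def genHermiteZeroFrequency (γ : ℝ) (n : ℕ) (y : ℝ) : ℝ :=
  ((genHermite γ n).roots.filter (· ≤ √n * y)).card / n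

lemma monotone_genHermiteZeroFrequency (γ : ℝ) (n : ℕ) :
    Monotone (genHermiteZeroFrequency γ n) := by
  intro x y hxy
  unfold genHermiteZeroFrequency
  gcongr
  exact Multiset.monotone_filter_right _ fun z hz => hz.trans (by gcongr)

lemma genHermiteZeroFrequency_mem_Icc (γ : ℝ) (n : ℕ) (y : ℝ) :
    genHermiteZeroFrequency γ n y ∈ Icc 0 1 := by
  refine ⟨by unfold genHermiteZeroFrequency; positivity, div_le_one_of_le₀ ?_ n.cast_nonneg⟩
  have hcard := (Multiset.card_le_card (Multiset.filter_le (· ≤ √n * y) _)).trans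
    (genHermite γ n).card_roots'
  rw [(isMonicOfDegree_genHermite γ n).natDegree_eq] at hcard
  exact_mod_cast hcard

lemma sub_one_div_le_genHermiteZeroFrequency_sub {γ a b k : ℝ} {n : ℕ} (hn : 0 < n) (hk : 0 < k)
    (hab : a ≤ b) (h₀ : 0 ∉ Icc a b)
    (hQ : ∀ t ∈ Icc a b, n * (π * k) ^ 2 < genHermitePotential γ n (√n * t)) :
    k * (b - a) - 1 / n ≤ genHermiteZeroFrequency γ n b - genHermiteZeroFrequency γ n a := by
  have hn' : (0 : ℝ) < n := Nat.cast_pos.2 hn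
  have hs : 0 < √n := sqrt_pos.2 hn'
  have hscale : ∀ t ∈ Icc (√n * a) (√n * b), t / √n ∈ Icc a b := fun t ht =>
    ⟨(le_div_iff₀' hs).2 ht.1, (div_le_iff₀' hs).2 ht.2⟩
  have hcount := div_sub_one_le_card_filter_le_sub (M := (genHermite γ n).roots)
    (h := 1 / (k * √n)) (by positivity) (mul_le_mul_of_nonneg_left hab hs.le) <| by
      intro x hax hxb
      have hmem : ∀ t ∈ Icc x (x + 1 / (k * √n)), t / √n ∈ Icc a b := fun t ht =>
        hscale t ⟨hax.trans ht.1, ht.2.trans hxb⟩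
      refine exists_mem_roots_genHermite (lt_add_of_pos_right x (by positivity))
        (fun h => h₀ (zero_div √n ▸ hmem 0 h)) fun t ht => ?_
      have hlt := hQ _ (hmem t (Ioo_subset_Icc_self ht))
      rw [mul_div_cancel₀ _ hs.ne'] at hlt
      refine hlt.trans_eq' ?_
      rw [add_sub_cancel_left, div_div_eq_mul_div, div_one, ← mul_assoc, mul_pow _ √n,
        sq_sqrt hn'.le, mul_comm]
  rw [genHermiteZeroFrequency, genHermiteZeroFrequency, ← sub_div, le_div_iff₀ hn']
  refine hcount.trans' (le_of_eq ?_)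
  field_simp
  rw [sq_sqrt hn'.le]

end Zeros

section LimitDensity

open Set Real Topology

/-- The limiting density of the zeros of `K_l^{(γ_l)}` divided by `√l`, including the factor
`1 / π` so that it is a probability density. Division by zero gives it the value `0` at `0`. -/
noncomputable def genHermiteDensity (c x : ℝ) : ℝ :=
  √((c + 1) - (x ^ 2 - c / 2 - 1) ^ 2) / (π * |x|)

lemma genHermiteDensity_eq (c : ℝ) {x : ℝ} (hx : x ≠ 0) :
    genHermiteDensity c x = √(genHermiteLimitPotential c x) / π := by
  have hV : (c + 1) - (x ^ 2 - c / 2 - 1) ^ 2 = x ^ 2 * genHermiteLimitPotential c x := by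
    rw [genHermiteLimitPotential]
    field
  rw [genHermiteDensity, hV, sqrt_mul (sq_nonneg x), sqrt_sq_eq_abs, mul_comm π,
    mul_div_mul_left _ _ (abs_ne_zero.2 hx)]

lemma continuousAt_genHermiteDensity (c : ℝ) {x : ℝ} (hx : x ≠ 0) :
    ContinuousAt (genHermiteDensity c) x :=
  ContinuousAt.div (by fun_prop) (by fun_prop) (mul_ne_zero pi_ne_zero (abs_ne_zero.2 hx))

lemma integral_genHermiteDensity {c : ℝ} (hc : 0 ≤ c) : ∫ x, genHermiteDensity c x = 1 := by
  have hr : √(c + 1) ^ 2 = c + 1 := sq_sqrt (by positivity)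
  let g : ℝ → ℝ := fun u => √(√(c + 1) ^ 2 - (u - (c / 2 + 1)) ^ 2) / u
  calc ∫ x, genHermiteDensity c x
      = 2 * ∫ x in Ioi 0, √((c + 1) - (x ^ 2 - c / 2 - 1) ^ 2) / (π * x) := by
        simp only [← integral_comp_abs, sq_abs, genHermiteDensity]
    _ = π⁻¹ * ∫ x in Ioi (0 : ℝ), (2 * x ^ ((2 : ℝ) - 1)) • g (x ^ (2 : ℝ)) := by
        simp_rw [← integral_const_mul]
        refine setIntegral_congr_fun measurableSet_Ioi fun x hx => ?_
        have hx₀ : x ≠ 0 := ne_of_gt hx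
        have htwo : (2 : ℝ) - 1 = 1 := by norm_num
        simp only [g, hr, htwo, rpow_one, rpow_two, smul_eq_mul, sub_sub]
        field
    _ = π⁻¹ * (π * (c / 2 + 1 - c / 2)) := by
        rw [integral_comp_rpow_Ioi_of_pos two_pos,
          integral_Ioi_marchenkoPastur (q := c / 2) (by positivity)
          (sqrt_le_iff.2 ⟨by positivity, by nlinarith [sq_nonneg c]⟩) (by positivity)
          (by rw [hr]; ring)]
    _ = 1 := by field

lemma eventually_mul_sub_le_genHermiteZeroFrequency_sub {γ : ℕ → ℝ} {c t k : ℝ}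
    (hlim : Tendsto (fun l : ℕ => γ l / l) atTop (𝓝 c)) (ht : t ≠ 0)
    (hk : k < genHermiteDensity c t) :
    ∀ᶠ s in 𝓝[>] t, ∀ᶠ l : ℕ in atTop,
      k * (s - t) ≤ genHermiteZeroFrequency (γ l) l s - genHermiteZeroFrequency (γ l) l t := by
  rcases lt_or_ge k 0 with hneg | hk₀
  · filter_upwards [self_mem_nhdsWithin] with s hts
    exact Eventually.of_forall fun l =>
      (mul_nonpos_of_nonpos_of_nonneg hneg.le (sub_pos.2 hts).le).trans
        (sub_nonneg.2 (monotone_genHermiteZeroFrequency (γ l) l (le_of_lt hts)))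
  obtain ⟨k', hkk', hk'⟩ := exists_between hk
  have hk'₀ := hk₀.trans_lt hkk'
  obtain ⟨a, b, htab, hab⟩ := mem_nhds_iff_exists_Ioo_subset.1 <|
    ((continuousAt_genHermiteDensity c ht).eventually_const_lt hk').and (isOpen_ne.mem_nhds ht)
  filter_upwards [Ioo_mem_nhdsGT htab.2] with s hs
  have hsub : ∀ x ∈ Icc t s, k' < genHermiteDensity c x ∧ x ≠ 0 := fun x hx =>
    hab (Icc_subset_Ioo htab.1 hs.2 hx)
  have h₀ : 0 ∉ Icc t s := fun h => (hsub 0 h).2 rfl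
  have hV : ∀ x ∈ Icc t s, (π * k') ^ 2 < genHermiteLimitPotential c x := by
    intro x hx
    have hlt := (hsub x hx).1
    rw [genHermiteDensity_eq c (hsub x hx).2, lt_div_iff₀' pi_pos] at hlt
    exact (lt_sqrt (by positivity)).1 hlt
  have hpos : 0 < (k' - k) * (s - t) := mul_pos (sub_pos.2 hkk') (sub_pos.2 hs.1)
  filter_upwards [eventually_lt_genHermitePotential hlim isCompact_Icc h₀ hV,
    tendsto_one_div_atTop_nhds_zero_nat.eventually_lt_const hpos, eventually_gt_atTop 0]
    with l hQ hl hl₀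
  linarith [sub_one_div_le_genHermiteZeroFrequency_sub hl₀ hk'₀ hs.1.le h₀ hQ]

lemma hasAsymptoticLowerDensity_genHermiteZeroFrequency {γ : ℕ → ℝ} {c : ℝ}
    (hlim : Tendsto (fun l : ℕ => γ l / l) atTop (𝓝 c)) :
    HasAsymptoticLowerDensity atTop (fun l => genHermiteZeroFrequency (γ l) l)
      (genHermiteDensity c) := by
  filter_upwards [compl_mem_ae_iff.2 (measure_singleton (0 : ℝ))] with t ht k hk
  exact eventually_mul_sub_le_genHermiteZeroFrequency_sub hlim ht hk

lemma setIntegral_Iic_genHermiteDensity (c y : ℝ) :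
    ∫ x in Iic y, genHermiteDensity c x =
      (1 / π) * ∫ x in {x : ℝ | x ≤ y ∧ (x ^ 2 - c / 2 - 1) ^ 2 < c + 1},
        √((c + 1) - (x ^ 2 - c / 2 - 1) ^ 2) / |x| := by
  rw [← integral_const_mul]
  simp_rw [one_div_mul_eq_div, div_div, mul_comm |_| π]
  refine setIntegral_eq_of_subset_of_forall_sdiff_eq_zero measurableSet_Iic (fun x hx => hx.1)
    fun x hx => ?_
  have hw : (c + 1) - (x ^ 2 - c / 2 - 1) ^ 2 ≤ 0 := by
    contrapose! hx
    exact fun h => h.2 ⟨h.1, sub_pos.1 hx⟩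
  rw [genHermiteDensity, sqrt_eq_zero_of_nonpos hw, zero_div]

end LimitDensity

theorem genHermite_asymptotic_zero_distribution_general
    (γ : ℕ → ℝ) (c : ℝ) (hc : 0 ≤ c)
    (hlim : Tendsto (fun l : ℕ => γ l / l) atTop (nhds c)) :
    ∀ y : ℝ,
      Tendsto
        (fun l : ℕ =>
          ((((genHermite (γ l) l).roots.filter
              (fun x => x ≤ Real.sqrt l * y)).card : ℝ)) / l)
        atTop
        (nhds ((1 / Real.pi) *
          ∫ x in {x : ℝ | x ≤ y ∧ (x ^ 2 - c / 2 - 1) ^ 2 < c + 1},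
            Real.sqrt ((c + 1) - (x ^ 2 - c / 2 - 1) ^ 2) / |x|)) := by
  intro y
  rw [← setIntegral_Iic_genHermiteDensity]
  exact tendsto_setIntegral_Iic_of_hasAsymptoticLowerDensity
    (fun l => monotone_genHermiteZeroFrequency (γ l) l)
    (fun l => genHermiteZeroFrequency_mem_Icc (γ l) l) (integral_genHermiteDensity hc)
    (hasAsymptoticLowerDensity_genHermiteZeroFrequency hlim) y

/-- **Asymptotic zero distribution of the generalized Hermite polynomials (Theorem 4.5).**
If `γ_l > -1` and `γ_l / l → c ≥ 0`, then the number `N_l(√l · y)` of zeros of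
`K_l^{(γ_l)}` (counted with multiplicity) that are `≤ √l · y` satisfies
`N_l(√l·y)/l → (1/π) ∫_{x ≤ y, (x²-c/2-1)² < c+1} √((c+1) - (x²-c/2-1)²)/|x| dx`. -/
theorem genHermite_asymptotic_zero_distribution
    (γ : ℕ → ℝ) (hγ : ∀ l ≥ 1, -1 < γ l)
    (c : ℝ) (hc : 0 ≤ c)
    (hlim : Tendsto (fun l : ℕ => γ l / l) atTop (nhds c)) :
    ∀ y : ℝ,
      Tendsto
        (fun l : ℕ =>
          ((((genHermite (γ l) l).roots.filter
              (fun x => x ≤ Real.sqrt l * y)).card : ℝ)) / l)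
        atTop
        (nhds ((1 / Real.pi) *
          ∫ x in {x : ℝ | x ≤ y ∧ (x ^ 2 - c / 2 - 1) ^ 2 < c + 1},
            Real.sqrt ((c + 1) - (x ^ 2 - c / 2 - 1) ^ 2) / |x|)) :=
  genHermite_asymptotic_zero_distribution_general γ c hc hlim
end
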